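/- Let v : ℝ → ℝ be a continuous 2π-periodic function, and let ṽ be a function on the closed unit disc D̄ ⊂ ℝ² that is continuous on D̄, twice continuously differentiable and harmonic (vanishing Laplacian) on the open unit disc D, satisfies ṽ(cos θ, sin θ) = v(θ) for all θ, and has finite Dirichlet integral ∫_D ‖∇ṽ‖² dA < ∞. Then −(1/(4π)) ∫_D ‖∇ṽ(x,y)‖² dx dy + (1/(2π)) ∫_0^{2π} v(θ) dθ + log( (1/(2π)) ∫_0^{2π} e^{−v(θ)} dθ ) ≤ 0. -/

import Mathlib

open MeasureTheory Real

/-!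
By the mean value property the claim reads `log (⨍ exp u) ≤ u 0 + (1 / 4π) ∫ ‖∇u‖²` with `u = -ṽ`.
Write `u = Re F` with `F` holomorphic and set `A = F / 2`, so that `exp u = |exp A|²` and
`4 |A'|² = ‖∇u‖²`. If `a n` and `b n` are the Taylor coefficients of `A` and `exp A`, comparing
coefficients in `(exp A)' = A' exp A` and applying Cauchy–Schwarz bounds the coefficients of
`P t = ∑ ‖b n‖² tⁿ` by a recursion that amounts to the differential inequality `P' ≤ Q' P` with
`Q t = ∑ n ‖a n‖² tⁿ`, whence `P ≤ ‖b 0‖² exp Q` (Lebedev–Milin). Finally `P (r²)` is the mean of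
`|exp A|²` over the circle of radius `r` (Parseval), while `π Q (1)` is the Dirichlet integral
of `A`. The boundary circle is reached by letting `r → 1`.
-/

section Comparison

lemma le_mul_exp_sub_of_deriv_le {f f' g g' : ℝ → ℝ} {a b : ℝ} (hab : a ≤ b)
    (hf : ∀ x ∈ Set.Icc a b, HasDerivAt f (f' x) x) (hg : ∀ x ∈ Set.Icc a b, HasDerivAt g (g' x) x)
    (hle : ∀ x ∈ Set.Icc a b, f' x ≤ g' x * f x) : f b ≤ f a * Real.exp (g b - g a) := by
  have hderiv : ∀ x ∈ Set.Icc a b, HasDerivAt (fun x ↦ f x * Real.exp (-g x))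
      (f' x * Real.exp (-g x) + f x * (Real.exp (-g x) * -g' x)) x :=
    fun x hx ↦ (hf x hx).mul (hg x hx).neg.exp
  have hanti : AntitoneOn (fun x ↦ f x * Real.exp (-g x)) (Set.Icc a b) := by
    refine antitoneOn_of_hasDerivWithinAt_nonpos (convex_Icc a b)
      (fun x hx ↦ (hderiv x hx).continuousAt.continuousWithinAt)
      (fun x hx ↦ (hderiv x (interior_subset hx)).hasDerivWithinAt) fun x hx ↦ ?_
    nlinarith [hle x (interior_subset hx), Real.exp_pos (-g x)]
  calc f b = f b * Real.exp (-g b) * Real.exp (g b) := by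
        rw [mul_assoc, ← Real.exp_add, neg_add_cancel, Real.exp_zero, mul_one]
    _ ≤ f a * Real.exp (-g a) * Real.exp (g b) := by
        exact mul_le_mul_of_nonneg_right
          (hanti (Set.left_mem_Icc.2 hab) (Set.right_mem_Icc.2 hab) hab) (Real.exp_nonneg _)
    _ = f a * Real.exp (g b - g a) := by rw [mul_assoc, ← Real.exp_add, neg_add_eq_sub]

end Comparison

section FormalSeries

open PowerSeries
open Finset.HasAntidiagonal (antidiagonal mem_antidiagonal)

lemma eval_trunc_eq_sum_range {R : Type*} [Semiring R] (F : R⟦X⟧) (N : ℕ) (t : R) :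
    (trunc N F).eval t = ∑ n ∈ Finset.range N, coeff n F * t ^ n :=
  eval₂_trunc_eq_sum_range t (RingHom.id R) N F

lemma eval_trunc_mul_le {R : Type*} [CommSemiring R] [PartialOrder R] [IsOrderedRing R] {F G : R⟦X⟧}
    (hF : ∀ n, 0 ≤ coeff n F) (hG : ∀ n, 0 ≤ coeff n G) (N : ℕ) {t : R} (ht : 0 ≤ t) :
    (trunc N (F * G)).eval t ≤ (trunc N F).eval t * (trunc N G).eval t := by
  simp only [eval_trunc_eq_sum_range]
  calc ∑ n ∈ Finset.range N, coeff n (F * G) * t ^ n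
      = ∑ n ∈ Finset.range N, ∑ i ∈ Finset.range (n + 1),
          coeff i F * t ^ i * (coeff (n - i) G * t ^ (n - i)) := by
        refine Finset.sum_congr rfl fun n _ ↦ ?_
        rw [coeff_mul, Finset.sum_mul, ← Nat.succ_eq_add_one,
          ← Finset.Nat.sum_antidiagonal_eq_sum_range_succ
            (fun i j ↦ coeff i F * t ^ i * (coeff j G * t ^ j))]
        refine Finset.sum_congr rfl fun p hp ↦ ?_
        rw [← mem_antidiagonal.1 hp, pow_add, mul_mul_mul_comm]
    _ = ∑ i ∈ Finset.range N, ∑ j ∈ Finset.range (N - i),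
          coeff i F * t ^ i * (coeff j G * t ^ j) :=
        Finset.sum_range_diag_flip N fun i j ↦ coeff i F * t ^ i * (coeff j G * t ^ j)
    _ ≤ ∑ i ∈ Finset.range N, ∑ j ∈ Finset.range N,
          coeff i F * t ^ i * (coeff j G * t ^ j) := by
        gcongr with i _
        · exact fun j _ _ ↦ mul_nonneg (mul_nonneg (hF i) (pow_nonneg ht i))
            (mul_nonneg (hG j) (pow_nonneg ht j))
        · exact Nat.sub_le N i
    _ = (∑ n ∈ Finset.range N, coeff n F * t ^ n) * ∑ n ∈ Finset.range N, coeff n G * t ^ n :=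
        (Finset.sum_mul_sum ..).symm

lemma eval_trunc_le_mul_exp_of_derivative_le {F Q : ℝ⟦X⟧} (hF : ∀ n, 0 ≤ coeff n F)
    (hQ : ∀ n, 0 ≤ coeff n Q) (hle : ∀ n, coeff n (d⁄dX ℝ F) ≤ coeff n (d⁄dX ℝ Q * F)) (N : ℕ)
    {t : ℝ} (ht : 0 ≤ t) :
    (trunc (N + 1) F).eval t ≤
      coeff 0 F * Real.exp ((trunc (N + 1) Q).eval t - coeff 0 Q) := by
  have heval_zero (G : ℝ⟦X⟧) : (trunc (N + 1) G).eval 0 = coeff 0 G := by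
    rw [← Polynomial.coeff_zero_eq_eval_zero, coeff_trunc, if_pos N.succ_pos]
  have hQ' (n : ℕ) : 0 ≤ coeff n (d⁄dX ℝ Q) := by
    rw [coeff_derivative]
    exact mul_nonneg (hQ _) (by positivity)
  rw [← heval_zero F, ← heval_zero Q]
  refine le_mul_exp_sub_of_deriv_le ht (fun x _ ↦ Polynomial.hasDerivAt _ x)
    (fun x _ ↦ Polynomial.hasDerivAt _ x) fun x hx ↦ ?_
  have hx0 : 0 ≤ x := hx.1
  rw [← trunc_derivative, ← trunc_derivative]
  calc (trunc N (d⁄dX ℝ F)).eval x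
      ≤ (trunc N (d⁄dX ℝ Q * F)).eval x := by
        simp only [eval_trunc_eq_sum_range]
        gcongr with n
        exact hle n
    _ ≤ (trunc N (d⁄dX ℝ Q)).eval x * (trunc N F).eval x := eval_trunc_mul_le hQ' hF N hx0
    _ ≤ (trunc N (d⁄dX ℝ Q)).eval x * (trunc (N + 1) F).eval x := by
        simp only [eval_trunc_eq_sum_range]
        gcongr with n
        · exact Finset.sum_nonneg fun n _ ↦ mul_nonneg (hQ' n) (pow_nonneg hx0 n)
        · exact fun n _ _ ↦ mul_nonneg (hF n) (pow_nonneg hx0 n)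
        · exact N.le_succ

-- Cauchy–Schwarz over the `n + 1` terms of `(n + 1) b (n + 1) = ∑ (i + 1) a (i + 1) b (n - i)`
-- costs a factor `n + 1`, which is absorbed by the one on the left.
lemma succ_mul_norm_coeff_sq_le {𝕜 : Type*} [RCLike 𝕜] {A B : 𝕜⟦X⟧}
    (hB : d⁄dX 𝕜 B = d⁄dX 𝕜 A * B) (n : ℕ) :
    (n + 1) * ‖coeff (n + 1) B‖ ^ 2 ≤ ∑ p ∈ antidiagonal n,
      ‖coeff p.1 (d⁄dX 𝕜 A)‖ ^ 2 * ‖coeff p.2 B‖ ^ 2 := by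
  have hnorm : (n + 1) * ‖coeff (n + 1) B‖ = ‖coeff n (d⁄dX 𝕜 B)‖ := by
    rw [coeff_derivative, norm_mul, mul_comm, ← Nat.cast_succ, ← Nat.cast_succ, RCLike.norm_natCast]
  refine le_of_mul_le_mul_left ?_ (Nat.cast_add_one_pos n : (0 : ℝ) < n + 1)
  calc (n + 1) * ((n + 1) * ‖coeff (n + 1) B‖ ^ 2)
      = ‖∑ p ∈ antidiagonal n, coeff p.1 (d⁄dX 𝕜 A) * coeff p.2 B‖ ^ 2 := by
        rw [← coeff_mul, ← hB, ← hnorm]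
        ring
    _ ≤ (∑ p ∈ antidiagonal n, ‖coeff p.1 (d⁄dX 𝕜 A)‖ * ‖coeff p.2 B‖) ^ 2 := by
        gcongr
        exact norm_sum_le_of_le _ fun p _ ↦ norm_mul_le _ _
    _ ≤ (n + 1) * ∑ p ∈ antidiagonal n,
          ‖coeff p.1 (d⁄dX 𝕜 A)‖ ^ 2 * ‖coeff p.2 B‖ ^ 2 := by
        simpa only [mul_pow, Finset.Nat.card_antidiagonal, Nat.cast_succ] using
          sq_sum_le_card_mul_sum_sq (s := antidiagonal n)
            (f := fun p ↦ ‖coeff p.1 (d⁄dX 𝕜 A)‖ * ‖coeff p.2 B‖)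

/-- The **Lebedev–Milin inequality**: `hB` says that `B` is `exp A` up to a constant factor. -/
lemma sum_norm_coeff_sq_le_exp {𝕜 : Type*} [RCLike 𝕜] {A B : 𝕜⟦X⟧}
    (hB : d⁄dX 𝕜 B = d⁄dX 𝕜 A * B) (N : ℕ) {t : ℝ} (ht : 0 ≤ t) :
    ∑ n ∈ Finset.range (N + 1), ‖coeff n B‖ ^ 2 * t ^ n ≤
      ‖coeff 0 B‖ ^ 2 *
        Real.exp (∑ n ∈ Finset.range (N + 1), n * ‖coeff n A‖ ^ 2 * t ^ n) := by
  have hle (n : ℕ) : coeff n (d⁄dX ℝ (mk fun n ↦ ‖coeff n B‖ ^ 2)) ≤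
      coeff n (d⁄dX ℝ (mk fun n ↦ n * ‖coeff n A‖ ^ 2) * mk fun n ↦ ‖coeff n B‖ ^ 2) := by
    have hnorm (i : ℕ) : ‖(i + 1 : 𝕜)‖ = i + 1 := by
      rw [← Nat.cast_succ, RCLike.norm_natCast, Nat.cast_succ]
    rw [coeff_derivative, coeff_mk, mul_comm]
    refine (succ_mul_norm_coeff_sq_le hB n).trans_eq ?_
    rw [coeff_mul]
    refine Finset.sum_congr rfl fun p _ ↦ ?_
    simp only [coeff_derivative, coeff_mk, norm_mul, hnorm, Nat.cast_succ]
    ring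
  simpa [eval_trunc_eq_sum_range] using eval_trunc_le_mul_exp_of_derivative_le
    (by simp) (fun n ↦ by rw [coeff_mk]; positivity) hle N ht

end FormalSeries

section TaylorSeries

open PowerSeries

/-- The Taylor series of `f` at `c`, as a formal power series. It lets the coefficients of products
and derivatives be handled by the algebra of `𝕜⟦X⟧`. -/
noncomputable def taylorPowerSeries {𝕜 : Type*} [NontriviallyNormedField 𝕜] (f : 𝕜 → 𝕜) (c : 𝕜) :
    𝕜⟦X⟧ :=
  PowerSeries.mk fun n ↦ iteratedDeriv n f c / n.factorial

section General

variable {𝕜 : Type*} [NontriviallyNormedField 𝕜] {f g : 𝕜 → 𝕜} {c : 𝕜}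

lemma coeff_zero_taylorPowerSeries (f : 𝕜 → 𝕜) (c : 𝕜) : coeff 0 (taylorPowerSeries f c) = f c := by
  simp [taylorPowerSeries]

lemma taylorPowerSeries_congr (h : f =ᶠ[nhds c] g) :
    taylorPowerSeries f c = taylorPowerSeries g c := by
  ext n
  simp only [taylorPowerSeries, coeff_mk, h.iteratedDeriv_eq n]

variable [CharZero 𝕜]

lemma derivative_taylorPowerSeries (f : 𝕜 → 𝕜) (c : 𝕜) :
    d⁄dX 𝕜 (taylorPowerSeries f c) = taylorPowerSeries (deriv f) c := by
  ext n
  have : (n.factorial : 𝕜) ≠ 0 := Nat.cast_ne_zero.2 n.factorial_ne_zero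
  have : (n + 1 : 𝕜) ≠ 0 := Nat.cast_add_one_ne_zero n
  simp only [taylorPowerSeries, coeff_derivative, coeff_mk, iteratedDeriv_succ', Nat.factorial_succ]
  push_cast
  field_simp

lemma taylorPowerSeries_mul (hf : ContDiffAt 𝕜 ⊤ f c) (hg : ContDiffAt 𝕜 ⊤ g c) :
    taylorPowerSeries (fun z ↦ f z * g z) c = taylorPowerSeries f c * taylorPowerSeries g c := by
  ext n
  rw [coeff_mul, Finset.Nat.sum_antidiagonal_eq_sum_range_succ_mk]
  simp only [taylorPowerSeries, coeff_mk]
  rw [iteratedDeriv_fun_mul (hf.of_le (by simp)) (hg.of_le (by simp)), Finset.sum_div]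
  refine Finset.sum_congr rfl fun i hi ↦ ?_
  rw [Nat.cast_choose 𝕜 (Finset.mem_range_succ_iff.1 hi)]
  have : (n.factorial : 𝕜) ≠ 0 := Nat.cast_ne_zero.2 n.factorial_ne_zero
  field_simp

end General

lemma derivative_taylorPowerSeries_cexp {A : ℂ → ℂ} {c : ℂ} (hA : AnalyticAt ℂ A c) :
    d⁄dX ℂ (taylorPowerSeries (fun z ↦ Complex.exp (A z)) c) =
      d⁄dX ℂ (taylorPowerSeries A c) * taylorPowerSeries (fun z ↦ Complex.exp (A z)) c := by
  have hderiv : deriv (fun z ↦ Complex.exp (A z)) =ᶠ[nhds c]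
      fun z ↦ deriv A z * Complex.exp (A z) := by
    filter_upwards [hA.eventually_analyticAt] with z hz
    rw [hz.differentiableAt.hasDerivAt.cexp.deriv, mul_comm]
  rw [derivative_taylorPowerSeries, derivative_taylorPowerSeries, taylorPowerSeries_congr hderiv,
    taylorPowerSeries_mul hA.deriv.contDiffAt hA.cexp'.contDiffAt]

lemma hasSum_taylorPowerSeries {f : ℂ → ℂ} {c z : ℂ} {R : ℝ}
    (hf : DifferentiableOn ℂ f (Metric.ball c R)) (hz : z ∈ Metric.ball c R) :
    HasSum (fun n ↦ coeff n (taylorPowerSeries f c) * (z - c) ^ n) (f z) := by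
  refine (Complex.hasSum_taylorSeries_on_ball hf hz).congr_fun fun n ↦ ?_
  simp only [taylorPowerSeries, coeff_mk, smul_eq_mul]
  ring

end TaylorSeries

section Parseval

open PowerSeries Metric

lemma sum_norm_sq_eq_circleAverage (a : ℕ → ℂ) (N : ℕ) :
    ∑ n ∈ Finset.range N, ‖a n‖ ^ 2 =
      circleAverage (fun z ↦ ‖∑ n ∈ Finset.range N, a n * z ^ n‖ ^ 2) 0 1 := by
  have h := (trunc N (PowerSeries.mk a)).sum_sq_norm_coeff_eq_circleAverage
  simp only [eval_trunc_eq_sum_range, coeff_mk] at h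
  rw [← h]
  refine ((Finset.sum_subset (fun n hn ↦ ?_) fun n _ hn ↦ ?_).trans
    (Finset.sum_congr rfl fun n hn ↦ ?_)).symm
  · rw [Polynomial.mem_support_iff, coeff_trunc] at hn
    exact Finset.mem_range.2 (of_not_not fun hN ↦ hn (if_neg hN))
  · rw [Polynomial.notMem_support_iff.1 hn, norm_zero, zero_pow two_ne_zero]
  · rw [coeff_trunc, if_pos (Finset.mem_range.1 hn), coeff_mk]

lemma hasSum_norm_sq_circleAverage {a : ℕ → ℂ} (ha : Summable fun n ↦ ‖a n‖) :
    HasSum (fun n ↦ ‖a n‖ ^ 2) (circleAverage (fun z ↦ ‖∑' n, a n * z ^ n‖ ^ 2) 0 1) := by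
  have hnorm (θ : ℝ) (n : ℕ) : ‖a n * circleMap 0 1 θ ^ n‖ = ‖a n‖ := by simp
  rw [hasSum_iff_tendsto_nat_of_nonneg fun n ↦ by positivity]
  simp only [sum_norm_sq_eq_circleAverage, circleAverage_def]
  refine (intervalIntegral.tendsto_integral_filter_of_dominated_convergence
    (fun _ ↦ (∑' n, ‖a n‖) ^ 2) ?_ ?_ intervalIntegrable_const ?_).const_smul _
  · exact .of_forall fun N ↦ Continuous.aestronglyMeasurable (by fun_prop)
  · refine .of_forall fun N ↦ .of_forall fun θ _ ↦ ?_
    rw [norm_pow, norm_norm]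
    gcongr
    refine (norm_sum_le _ _).trans ?_
    simp only [hnorm]
    exact ha.sum_le_tsum _ fun _ _ ↦ norm_nonneg _
  · refine .of_forall fun θ _ ↦ ?_
    have hsum : Summable fun n ↦ a n * circleMap 0 1 θ ^ n := .of_norm (by simpa only [hnorm])
    exact (hsum.hasSum.tendsto_sum_nat.norm).pow 2

lemma hasSum_norm_coeff_taylorPowerSeries_sq {f : ℂ → ℂ} {c : ℂ} {r R : ℝ}
    (hf : DifferentiableOn ℂ f (ball c R)) (hr : 0 ≤ r) (hrR : r < R) :
    HasSum (fun n ↦ ‖coeff n (taylorPowerSeries f c)‖ ^ 2 * r ^ (2 * n))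
      (circleAverage (fun z ↦ ‖f z‖ ^ 2) c r) := by
  have hsum {z : ℂ} (hz : ‖z‖ = 1) :
      HasSum (fun n ↦ coeff n (taylorPowerSeries f c) * r ^ n * z ^ n) (f (r * z + c)) := by
    refine (hasSum_taylorPowerSeries hf (z := r * z + c) ?_).congr_fun fun n ↦ ?_
    · rwa [mem_ball_iff_norm, add_sub_cancel_right, norm_mul, hz, mul_one, Complex.norm_real,
        norm_of_nonneg hr]
    · rw [add_sub_cancel_right, mul_pow, mul_assoc]
  have hsum_norm : Summable fun n ↦ ‖coeff n (taylorPowerSeries f c) * r ^ n‖ := by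
    simpa using (hsum norm_one).summable.norm
  convert hasSum_norm_sq_circleAverage hsum_norm using 1
  · ext n
    rw [norm_mul, mul_pow, norm_pow, Complex.norm_real, norm_of_nonneg hr, ← pow_mul, mul_comm 2]
  · rw [circleAverage_eq_circleAverage_zero_one]
    refine circleAverage_congr_sphere fun z hz ↦ ?_
    rw [abs_one, mem_sphere_zero_iff_norm] at hz
    simp only [(hsum hz).tsum_eq]

end Parseval

section Area

open PowerSeries Metric

lemma lintegral_eq_lintegral_circleMap {g : ℂ → ENNReal} (hg : Measurable g) (c : ℂ) :
    ∫⁻ z, g z =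
      ∫⁻ r in Set.Ioi 0, ENNReal.ofReal r * ∫⁻ θ in Set.Ioo (-π) π, g (circleMap c r θ) := by
  have hsymm (r θ : ℝ) : Complex.polarCoord.symm (r, θ) + c = circleMap c r θ := by
    rw [Complex.polarCoord_symm_apply, circleMap, Complex.exp_mul_I, add_comm, Complex.ofReal_cos,
      Complex.ofReal_sin]
  have hmeas : Measurable fun p : ℝ × ℝ ↦ ENNReal.ofReal p.1 • g (circleMap c p.1 p.2) := by
    unfold circleMap
    fun_prop
  rw [← lintegral_add_right_eq_self g c, ← Complex.lintegral_comp_polarCoord_symm,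
    polarCoord_target, Measure.volume_eq_prod]
  simp only [← hsymm] at hmeas
  rw [setLIntegral_prod _ hmeas.aemeasurable]
  simp only [hsymm, smul_eq_mul, lintegral_const_mul' _ _ ENNReal.ofReal_ne_top]

lemma lintegral_circleMap {g : ℂ → ℝ} {c : ℂ} {r : ℝ} (hg : CircleIntegrable g c r)
    (hg0 : ∀ z, 0 ≤ g z) :
    ∫⁻ θ in Set.Ioo (-π) π, ENNReal.ofReal (g (circleMap c r θ)) =
      ENNReal.ofReal (2 * π * circleAverage g c r) := by
  have hper : Function.Periodic (fun θ ↦ g (circleMap c r θ)) (2 * π) :=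
    (periodic_circleMap c r).comp g
  have hle : -π ≤ π := by linarith [pi_pos]
  have hint : IntegrableOn (fun θ ↦ g (circleMap c r θ)) (Set.Ioo (-π) π) :=
    (intervalIntegrable_iff_integrableOn_Ioo_of_le hle).1
      (hper.intervalIntegrable₀ two_pi_pos.ne' hg _ _)
  have hshift := hper.intervalIntegral_add_eq 0 (-π)
  rw [zero_add, show -π + 2 * π = π by ring] at hshift
  rw [← ofReal_integral_eq_lintegral_ofReal hint (.of_forall fun θ ↦ hg0 _), circleAverage_def,
    smul_eq_mul, mul_inv_cancel_left₀ two_pi_pos.ne', hshift, intervalIntegral.integral_of_le hle,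
    integral_Ioc_eq_integral_Ioo]

lemma lintegral_ball_eq_lintegral_circleAverage {g : ℂ → ℝ} {c : ℂ} {R : ℝ}
    (hg : ContinuousOn g (ball c R)) (hg0 : ∀ z, 0 ≤ g z) :
    ∫⁻ z in ball c R, ENNReal.ofReal (g z) =
      ∫⁻ r in Set.Ioo 0 R, ENNReal.ofReal (2 * π * r * circleAverage g c r) := by
  have hmeas : Measurable ((ball c R).indicator fun z ↦ ENNReal.ofReal (g z)) := by
    classical
    rw [← Set.piecewise_eq_indicator]
    exact (ENNReal.continuous_ofReal.comp_continuousOn hg).measurable_piecewise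
      continuousOn_const isOpen_ball.measurableSet
  rw [← lintegral_indicator isOpen_ball.measurableSet, lintegral_eq_lintegral_circleMap hmeas c,
    ← Set.Iio_inter_Ioi (a := R), ← setLIntegral_indicator measurableSet_Iio]
  refine setLIntegral_congr_fun measurableSet_Ioi fun r (hr : 0 < r) ↦ ?_
  have hmem (θ : ℝ) : circleMap c r θ ∈ ball c R ↔ r < R := by
    rw [mem_ball_iff_norm, circleMap_sub_center, norm_circleMap_zero, abs_of_pos hr]
  by_cases hrR : r < R
  · have hcirc : CircleIntegrable g c r :=
      (hg.mono (sphere_subset_ball hrR)).circleIntegrable hr.le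
    simp only [Set.indicator_of_mem ((hmem _).2 hrR), Set.indicator_of_mem (Set.mem_Iio.2 hrR),
      lintegral_circleMap hcirc hg0, ← ENNReal.ofReal_mul hr.le]
    ring_nf
  · simp only [Set.indicator_of_notMem ((hmem _).not.2 hrR),
      Set.indicator_of_notMem (Set.mem_Iio.not.2 hrR), lintegral_zero, mul_zero]

lemma setLIntegral_Ioo_pow {R : ℝ} (hR : 0 ≤ R) (n : ℕ) :
    ∫⁻ r in Set.Ioo 0 R, ENNReal.ofReal (r ^ n) = ENNReal.ofReal (R ^ (n + 1) / (n + 1)) := by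
  have hint : IntegrableOn (fun r : ℝ ↦ r ^ n) (Set.Ioo 0 R) :=
    (continuous_pow n).integrableOn_Icc.mono_set Set.Ioo_subset_Icc_self
  have hnonneg : 0 ≤ᵐ[volume.restrict (Set.Ioo 0 R)] fun r : ℝ ↦ r ^ n :=
    ae_restrict_of_forall_mem measurableSet_Ioo fun r hr ↦ pow_nonneg hr.1.le n
  rw [← ofReal_integral_eq_lintegral_ofReal hint hnonneg, ← integral_Ioc_eq_integral_Ioo,
    ← intervalIntegral.integral_of_le hR, integral_pow, zero_pow n.succ_ne_zero, sub_zero]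

lemma lintegral_ball_norm_sq_eq_tsum {f : ℂ → ℂ} {c : ℂ} {R : ℝ}
    (hf : DifferentiableOn ℂ f (ball c R)) (hR : 0 ≤ R) :
    ∫⁻ z in ball c R, ENNReal.ofReal (‖f z‖ ^ 2) =
      ∑' n : ℕ, ENNReal.ofReal
        (π * ‖coeff n (taylorPowerSeries f c)‖ ^ 2 * R ^ (2 * n + 2) / (n + 1)) := by
  set a : ℕ → ℂ := fun n ↦ coeff n (taylorPowerSeries f c)
  calc ∫⁻ z in ball c R, ENNReal.ofReal (‖f z‖ ^ 2)
      = ∫⁻ r in Set.Ioo 0 R, ENNReal.ofReal (2 * π * r * circleAverage (fun z ↦ ‖f z‖ ^ 2) c r) :=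
        lintegral_ball_eq_lintegral_circleAverage (hf.continuousOn.norm.pow 2) fun z ↦ sq_nonneg _
    _ = ∫⁻ r in Set.Ioo 0 R, ∑' n : ℕ,
          ENNReal.ofReal (2 * π * ‖a n‖ ^ 2) * ENNReal.ofReal (r ^ (2 * n + 1)) := by
        refine setLIntegral_congr_fun measurableSet_Ioo fun r ⟨hr, hrR⟩ ↦ ?_
        have hsum : HasSum (fun n ↦ 2 * π * r * (‖a n‖ ^ 2 * r ^ (2 * n))) _ :=
          (hasSum_norm_coeff_taylorPowerSeries_sq hf hr.le hrR).mul_left (2 * π * r)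
        rw [← hsum.tsum_eq, ENNReal.ofReal_tsum_of_nonneg (fun n ↦ by positivity) hsum.summable]
        refine tsum_congr fun n ↦ ?_
        rw [← ENNReal.ofReal_mul (by positivity)]
        ring_nf
    _ = ∑' n : ℕ, ENNReal.ofReal (2 * π * ‖a n‖ ^ 2) *
          ENNReal.ofReal (R ^ (2 * n + 1 + 1) / ((2 * n + 1 : ℕ) + 1)) := by
        rw [lintegral_tsum fun n ↦ by fun_prop]
        simp only [lintegral_const_mul' _ _ ENNReal.ofReal_ne_top, setLIntegral_Ioo_pow hR]
    _ = ∑' n : ℕ, ENNReal.ofReal (π * ‖a n‖ ^ 2 * R ^ (2 * n + 2) / (n + 1)) := by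
        refine tsum_congr fun n ↦ ?_
        rw [← ENNReal.ofReal_mul (by positivity)]
        congr 1
        push_cast
        field_simp
        ring

lemma hasSum_integral_ball_norm_sq {f : ℂ → ℂ} {c : ℂ} {R : ℝ}
    (hf : DifferentiableOn ℂ f (ball c R)) (hR : 0 ≤ R)
    (hint : IntegrableOn (fun z ↦ ‖f z‖ ^ 2) (ball c R)) :
    HasSum (fun n : ℕ ↦ π * ‖coeff n (taylorPowerSeries f c)‖ ^ 2 * R ^ (2 * n + 2) / (n + 1))
      (∫ z in ball c R, ‖f z‖ ^ 2) := by
  have htsum := (ofReal_integral_eq_lintegral_ofReal hint (.of_forall fun z ↦ sq_nonneg _)).trans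
    (lintegral_ball_norm_sq_eq_tsum hf hR)
  have hnonneg : 0 ≤ ∫ z in ball c R, ‖f z‖ ^ 2 := integral_nonneg fun z ↦ sq_nonneg _
  have hsum := ENNReal.hasSum_toReal (htsum ▸ ENNReal.ofReal_ne_top)
  rw [← ENNReal.tsum_toReal_eq fun n ↦ ENNReal.ofReal_ne_top, ← htsum,
    ENNReal.toReal_ofReal hnonneg] at hsum
  exact hsum.congr_fun fun n ↦ (ENNReal.toReal_ofReal (by positivity)).symm

/-- The **area formula**: for injective `A` the integral is the area of the image of the ball. -/
lemma hasSum_integral_ball_norm_deriv_sq {A : ℂ → ℂ} {c : ℂ} {R : ℝ}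
    (hA : DifferentiableOn ℂ A (ball c R)) (hR : 0 ≤ R)
    (hint : IntegrableOn (fun z ↦ ‖deriv A z‖ ^ 2) (ball c R)) :
    HasSum (fun n : ℕ ↦ n * ‖coeff n (taylorPowerSeries A c)‖ ^ 2 * R ^ (2 * n))
      (π⁻¹ * ∫ z in ball c R, ‖deriv A z‖ ^ 2) := by
  have hsum := (hasSum_integral_ball_norm_sq (hA.deriv isOpen_ball) hR hint).mul_left π⁻¹
  rw [← hasSum_nat_add_iff' 1]
  simp only [Finset.sum_range_one, Nat.cast_zero, zero_mul, sub_zero]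
  refine hsum.congr_fun fun n ↦ ?_
  have hnorm : ‖(n + 1 : ℂ)‖ = n + 1 := by
    rw [← Nat.cast_succ, Complex.norm_natCast, Nat.cast_succ]
  rw [← derivative_taylorPowerSeries, coeff_derivative, norm_mul, hnorm]
  push_cast
  field_simp
  ring

end Area

section Exponential

open PowerSeries Metric

lemma circleAverage_norm_exp_sq_le {A : ℂ → ℂ} {c : ℂ} {r R : ℝ}
    (hA : DifferentiableOn ℂ A (ball c R))
    (hint : IntegrableOn (fun z ↦ ‖deriv A z‖ ^ 2) (ball c R)) (hr : 0 ≤ r) (hrR : r < R) :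
    circleAverage (fun z ↦ ‖Complex.exp (A z)‖ ^ 2) c r ≤
      ‖Complex.exp (A c)‖ ^ 2 * Real.exp (π⁻¹ * ∫ z in ball c R, ‖deriv A z‖ ^ 2) := by
  have hR : 0 < R := hr.trans_lt hrR
  have hODE := derivative_taylorPowerSeries_cexp (hA.analyticAt (ball_mem_nhds c hR))
  have hparseval := hasSum_norm_coeff_taylorPowerSeries_sq hA.cexp hr hrR
  have harea := hasSum_integral_ball_norm_deriv_sq hA hR.le hint
  refine le_of_tendsto' ((Filter.tendsto_add_atTop_iff_nat 1).2 hparseval.tendsto_sum_nat)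
    fun N ↦ ?_
  simp only [pow_mul] at harea ⊢
  refine (sum_norm_coeff_sq_le_exp hODE N (sq_nonneg r)).trans ?_
  rw [coeff_zero_taylorPowerSeries]
  gcongr
  calc ∑ n ∈ Finset.range (N + 1), n * ‖coeff n (taylorPowerSeries A c)‖ ^ 2 * (r ^ 2) ^ n
      ≤ ∑ n ∈ Finset.range (N + 1), n * ‖coeff n (taylorPowerSeries A c)‖ ^ 2 * (R ^ 2) ^ n := by
        gcongr
    _ ≤ π⁻¹ * ∫ z in ball c R, ‖deriv A z‖ ^ 2 :=
        sum_le_hasSum _ (fun n _ ↦ by positivity) harea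

end Exponential

section Harmonic

open InnerProductSpace Metric

lemma norm_fderiv_re {f : ℂ → ℂ} {z : ℂ} (hf : DifferentiableAt ℂ f z) :
    ‖fderiv ℝ (fun w ↦ (f w).re) z‖ = ‖deriv f z‖ := by
  have hfderiv : fderiv ℝ (fun w ↦ (f w).re) z = innerSL ℝ (starRingEnd ℂ (deriv f z)) := by
    have h := Complex.reCLM.hasFDerivAt.comp z (hf.hasDerivAt.hasFDerivAt.restrictScalars ℝ)
    refine h.fderiv.trans (ContinuousLinearMap.ext fun w ↦ ?_)
    simp [Complex.inner]
  rw [hfderiv, innerSL_apply_norm, RCLike.norm_conj]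

lemma circleAverage_exp_le_of_harmonicOnNhd {u : ℂ → ℝ} {c : ℂ} {r R : ℝ}
    (hu : HarmonicOnNhd u (ball c R))
    (hint : IntegrableOn (fun z ↦ ‖fderiv ℝ u z‖ ^ 2) (ball c R)) (hr : 0 ≤ r) (hrR : r < R) :
    circleAverage (fun z ↦ Real.exp (u z)) c r ≤
      Real.exp (u c + (4 * π)⁻¹ * ∫ z in ball c R, ‖fderiv ℝ u z‖ ^ 2) := by
  obtain ⟨F, hF, hFu⟩ := hu.exists_analyticOnNhd_ball_re_eq
  have hA : DifferentiableOn ℂ (fun z ↦ F z / 2) (ball c R) := hF.differentiableOn.div_const 2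
  have hexp : ∀ z ∈ ball c R, ‖Complex.exp (F z / 2)‖ ^ 2 = Real.exp (u z) := fun z hz ↦ by
    rw [Complex.norm_exp, ← Real.exp_nat_mul, ← hFu hz, Nat.cast_ofNat, Complex.div_ofNat_re,
      mul_div_cancel₀ _ two_ne_zero]
  have hderiv : Set.EqOn (fun z ↦ ‖deriv (fun z ↦ F z / 2) z‖ ^ 2)
      (fun z ↦ 4⁻¹ * ‖fderiv ℝ u z‖ ^ 2) (ball c R) := fun z hz ↦ by
    have hre : fderiv ℝ u z = fderiv ℝ (fun w ↦ (F w).re) z :=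
      (hFu.eventuallyEq_of_mem (isOpen_ball.mem_nhds hz)).fderiv_eq.symm
    simp only [hre, norm_fderiv_re (hF z hz).differentiableAt, deriv_div_const, norm_div,
      Complex.norm_ofNat]
    ring
  have hint' : IntegrableOn (fun z ↦ ‖deriv (fun z ↦ F z / 2) z‖ ^ 2) (ball c R) :=
    (integrableOn_congr_fun hderiv isOpen_ball.measurableSet).2 (hint.const_mul 4⁻¹)
  have h := circleAverage_norm_exp_sq_le hA hint' hr hrR
  rw [setIntegral_congr_fun isOpen_ball.measurableSet hderiv, integral_const_mul,
    hexp c (mem_ball_self (hr.trans_lt hrR)), ← Real.exp_add, ← mul_assoc, ← mul_inv_rev] at h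
  refine (circleAverage_congr_sphere fun z hz ↦ (hexp z ?_).symm).trans_le h
  exact sphere_subset_ball (by rwa [abs_of_nonneg hr]) hz

lemma circleAverage_exp_le_of_harmonicContOnCl {u : ℂ → ℝ} {c : ℂ} {R : ℝ} (hR : 0 < R)
    (hu : HarmonicContOnCl u (ball c R))
    (hint : IntegrableOn (fun z ↦ ‖fderiv ℝ u z‖ ^ 2) (ball c R)) :
    circleAverage (fun z ↦ Real.exp (u z)) c R ≤
      Real.exp (u c + (4 * π)⁻¹ * ∫ z in ball c R, ‖fderiv ℝ u z‖ ^ 2) := by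
  have hcont : ContinuousOn (circleAverage (fun z ↦ Real.exp (u z)) c) (Set.Icc 0 R) := by
    refine ContinuousOn.circleAverage (hu.continuousOn_ball.rexp.mono fun z hz ↦ ?_) fun r hr ↦ hr.1
    exact mem_closedBall_iff_norm.2 hz.2
  rw [← closure_Ico hR.ne] at hcont
  have hle : ∀ r ∈ Set.Ico 0 R, circleAverage (fun z ↦ Real.exp (u z)) c r ≤
      Real.exp (u c + (4 * π)⁻¹ * ∫ z in ball c R, ‖fderiv ℝ u z‖ ^ 2) :=
    fun r hr ↦ circleAverage_exp_le_of_harmonicOnNhd hu.1 hint hr.1 hr.2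
  exact le_on_closure hle hcont continuousOn_const
    (closure_Ico hR.ne ▸ Set.right_mem_Icc.2 hR.le)

lemma log_circleAverage_exp_le {u : ℂ → ℝ} {c : ℂ} {R : ℝ} (hR : 0 < R)
    (hu : HarmonicContOnCl u (ball c R))
    (hint : IntegrableOn (fun z ↦ ‖fderiv ℝ u z‖ ^ 2) (ball c R)) :
    log (circleAverage (fun z ↦ Real.exp (u z)) c R) ≤
      circleAverage u c R + (4 * π)⁻¹ * ∫ z in ball c R, ‖fderiv ℝ u z‖ ^ 2 := by
  have hcirc : CircleIntegrable (fun z ↦ Real.exp (u z)) c R :=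
    (hu.continuousOn_ball.rexp.mono sphere_subset_closedBall).circleIntegrable hR.le
  have hpos : 0 < circleAverage (fun z ↦ Real.exp (u z)) c R :=
    smul_pos (inv_pos.2 two_pi_pos) <| intervalIntegral.intervalIntegral_pos_of_pos hcirc
      (fun θ ↦ Real.exp_pos _) two_pi_pos
  have hmean : circleAverage u c R = u c :=
    InnerProductSpace.HarmonicContOnCl.circleAverage_eq (by rwa [abs_of_pos hR])
  rw [hmean, log_le_iff_le_exp hpos]
  exact circleAverage_exp_le_of_harmonicContOnCl hR hu hint

lemma harmonicOnNhd_of_contDiffOn {E : Type*} [NormedAddCommGroup E] [NormedSpace ℝ E] {u : ℂ → E}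
    {s : Set ℂ} (hs : IsOpen s) (hu : ContDiffOn ℝ 2 u s)
    (hlap : ∀ z ∈ s, fderiv ℝ (fun w ↦ fderiv ℝ u w 1) z 1 +
      fderiv ℝ (fun w ↦ fderiv ℝ u w Complex.I) z Complex.I = 0) :
    HarmonicOnNhd u s := by
  refine fun z hz ↦ ⟨hu.contDiffAt (hs.mem_nhds hz), ?_⟩
  filter_upwards [hs.mem_nhds hz] with w hw
  have hd : DifferentiableAt ℝ (fderiv ℝ u) w :=
    ((hu.contDiffAt (hs.mem_nhds hw)).fderiv_right (m := 1) (by norm_num)).differentiableAt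
      one_ne_zero
  rw [laplacian_eq_iteratedFDeriv_complexPlane]
  simpa [iteratedFDeriv_two_apply, fderiv_clm_apply hd (differentiableAt_const _)] using hlap w hw

lemma circleAverage_zero_one_eq {E : Type*} [NormedAddCommGroup E] [NormedSpace ℝ E] (f : ℂ → E) :
    circleAverage f 0 1 =
      (2 * π)⁻¹ • ∫ θ in (0 : ℝ)..2 * π, f (Complex.exp (θ * Complex.I)) := by
  simp [circleAverage_def, circleMap]

end Harmonic

/-- The Moser–Trudinger inequality on the circle `S¹`: if `ṽ` is the harmonic
extension to the unit disc of a continuous `2π`-periodic function `v` with finite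
Dirichlet energy, then
`-(1/(4π)) ∫_D ‖∇ṽ‖² + (1/(2π)) ∫_0^{2π} v + log((1/(2π)) ∫_0^{2π} e^{-v}) ≤ 0`. -/
theorem moser_trudinger_circle
    (v : ℝ → ℝ) (hv : Continuous v) (hper : Function.Periodic v (2 * π))
    (vtilde : ℂ → ℝ)
    (hcont : ContinuousOn vtilde {z : ℂ | ‖z‖ ≤ 1})
    (hC2 : ContDiffOn ℝ 2 vtilde {z : ℂ | ‖z‖ < 1})
    (hharm : ∀ z : ℂ, ‖z‖ < 1 →
      fderiv ℝ (fun w => fderiv ℝ vtilde w 1) z 1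
        + fderiv ℝ (fun w => fderiv ℝ vtilde w Complex.I) z Complex.I = 0)
    (hbdry : ∀ θ : ℝ, vtilde (Complex.exp (θ * Complex.I)) = v θ)
    (hdir : IntegrableOn (fun z => ‖fderiv ℝ vtilde z‖ ^ 2) {z : ℂ | ‖z‖ < 1} volume) :
    -(1 / (4 * π)) * (∫ z in {z : ℂ | ‖z‖ < 1}, ‖fderiv ℝ vtilde z‖ ^ 2)
      + (1 / (2 * π)) * (∫ θ in (0:ℝ)..(2 * π), v θ)
      + Real.log ((1 / (2 * π)) * ∫ θ in (0:ℝ)..(2 * π), Real.exp (-v θ)) ≤ 0 := by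
  have hball : {z : ℂ | ‖z‖ < 1} = Metric.ball 0 1 := by ext; simp
  have hclosed : {z : ℂ | ‖z‖ ≤ 1} = Metric.closedBall 0 1 := by ext; simp
  rw [hball] at hC2 hdir ⊢
  rw [hclosed] at hcont
  have hneg : InnerProductSpace.HarmonicContOnCl (-vtilde) (Metric.ball 0 1) :=
    .neg (.mk_ball (harmonicOnNhd_of_contDiffOn Metric.isOpen_ball hC2
      fun z hz ↦ hharm z (mem_ball_zero_iff.1 hz)) hcont)
  have hgrad (z : ℂ) : ‖fderiv ℝ (-vtilde) z‖ = ‖fderiv ℝ vtilde z‖ := by rw [fderiv_neg, norm_neg]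
  have h := log_circleAverage_exp_le one_pos hneg (by simpa only [hgrad] using hdir)
  simp only [circleAverage_zero_one_eq, hgrad, Pi.neg_apply, hbdry, intervalIntegral.integral_neg,
    smul_eq_mul, ← one_div] at h
  linarith
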